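/- Let δ > 0, α > 1, R ≥ R₀ > √(δ/(α−1)), and k > 0 with k < 8δ/(α − 1 − δ/R_T²)², where R_T ≥ R. Define g : ℝ^J_per → ℝ^J_per by g(F) = 2F − 2V + k·L_h F − (k·v_c/(6h))·(1/R²)·φ(F,F), where L_h F_i = (δ/R⁴)Δ_h²F_i + (1/R²)(α−1+δ/R²)Δ_hF_i + ((α−1)/R²)F_i. Then for every J-periodic V there exists a J-periodic F* with g(F*) = 0. -/

import Mathlib

/-- Discrete Laplacian. -/
noncomputable def dlap (h : ℝ) (V : ℤ → ℝ) (i : ℤ) : ℝ :=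
  (V (i - 1) - 2 * V i + V (i + 1)) / h ^ 2

/-- Nonlinear term φ. -/
def dphi (V W : ℤ → ℝ) (i : ℤ) : ℝ :=
  (V (i - 1) + V i + V (i + 1)) * (W (i + 1) - W (i - 1))

open MeasureTheory Metric Set

section Brouwer

/-- Evaluation at `1` of polynomials of bounded degree is a combination of evaluations at
arbitrarily small positive nodes. -/
lemma exists_eval_one_eq_sum (n : ℕ) {ε : ℝ} (hε : 0 < ε) :
    ∃ (s : Finset ℝ) (w : ℝ → ℝ), (∀ t ∈ s, t ∈ Ioo 0 ε) ∧
      ∀ p : Polynomial ℝ, p.natDegree ≤ n → p.eval 1 = ∑ t ∈ s, w t * p.eval t := by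
  obtain ⟨s, hs, hcard⟩ := (Ioo_infinite hε).exists_subset_card_eq (n + 1)
  refine ⟨s, fun t => (Lagrange.basis s id t).eval 1, fun t ht => hs ht, fun p hp => ?_⟩
  have hdeg : p.degree < s.card := by
    rw [hcard]
    exact (Polynomial.degree_le_of_natDegree_le hp).trans_lt (by exact_mod_cast Nat.lt_succ_self n)
  conv_lhs => rw [Lagrange.eq_interpolate (s := s) (v := id) Function.injective_id.injOn hdeg]
  simp [Lagrange.interpolate_apply, Polynomial.eval_finsetSum, mul_comm]

variable {E : Type*} [NormedAddCommGroup E] [InnerProductSpace ℝ E]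

/-- A map on a closed ball that is Lipschitz and vanishes on the boundary sphere stays Lipschitz
when extended by zero. -/
lemma norm_indicator_closedBall_sub_le {v : E → E} {S K : ℝ} (hK : 0 ≤ K)
    (hv : ∀ x ∈ closedBall (0 : E) S, ∀ y ∈ closedBall (0 : E) S, ‖v x - v y‖ ≤ K * ‖x - y‖)
    (hv0 : ∀ x, ‖x‖ = S → v x = 0) (x y : E) :
    ‖(closedBall (0 : E) S).indicator v x - (closedBall (0 : E) S).indicator v y‖
      ≤ K * ‖x - y‖ := by
  have key : ∀ x ∈ closedBall (0 : E) S, ∀ y ∉ closedBall (0 : E) S, ‖v x‖ ≤ K * ‖x - y‖ := by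
    intro x hx y hy
    rw [mem_closedBall_zero_iff] at hx hy
    obtain ⟨s, hs, hsS⟩ := intermediate_value_Icc (zero_le_one' ℝ)
      (f := fun s : ℝ => ‖x + s • (y - x)‖) (by fun_prop)
      (show S ∈ Icc _ _ by simpa using ⟨hx, (not_le.1 hy).le⟩)
    have h := hv x (by simpa using hx) (x + s • (y - x)) (by simpa using hsS.le)
    rw [hv0 _ hsS, sub_zero] at h
    refine h.trans (mul_le_mul_of_nonneg_left ?_ hK)
    rw [sub_add_cancel_left, norm_neg, norm_smul, Real.norm_of_nonneg hs.1, norm_sub_rev y]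
    exact mul_le_of_le_one_left (norm_nonneg _) hs.2
  by_cases hx : x ∈ closedBall (0 : E) S <;> by_cases hy : y ∈ closedBall (0 : E) S
  · simpa only [indicator_of_mem hx, indicator_of_mem hy] using hv x hx y hy
  · simpa only [indicator_of_mem hx, indicator_of_notMem hy, sub_zero] using key x hx y hy
  · simpa only [indicator_of_notMem hx, indicator_of_mem hy, zero_sub, norm_neg,
      norm_sub_rev x y] using key y hy x hx
  · simpa only [indicator_of_notMem hx, indicator_of_notMem hy, sub_self, norm_zero] using
      mul_nonneg hK (norm_nonneg _)

variable [FiniteDimensional ℝ E]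

lemma exists_polynomial_eval_eq_det_one_add_smul (A : E →L[ℝ] E) :
    ∃ p : Polynomial ℝ, p.natDegree ≤ Module.finrank ℝ E ∧
      ∀ t : ℝ, p.eval t = (1 + t • A).det := by
  let b := Module.finBasis ℝ E
  let M := LinearMap.toMatrix b b (A : E →ₗ[ℝ] E)
  refine ⟨((Polynomial.X : Polynomial ℝ) • M.map Polynomial.C +
      (1 : Matrix _ _ ℝ).map Polynomial.C).det, ?_, fun t => ?_⟩
  · simpa using Polynomial.natDegree_det_X_add_C_le M 1
  · have h : ((1 + t • A : E →L[ℝ] E) : E →ₗ[ℝ] E) = 1 + t • (A : E →ₗ[ℝ] E) := by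
      ext; simp
    rw [ContinuousLinearMap.det, h, ← LinearMap.det_toMatrix b, map_add, map_smul,
      ← Polynomial.coe_evalRingHom, RingHom.map_det]
    congr 1
    ext i j
    by_cases hij : i = j <;>
      simp [M, LinearMap.toMatrix_one, hij, add_comm (1 : ℝ), mul_comm t]

lemma bijective_add_of_norm_sub_le {u : E → E} {c : ℝ} (hc : c < 1)
    (hu : ∀ x y, ‖u x - u y‖ ≤ c * ‖x - y‖) : Function.Bijective fun x => x + u x := by
  constructor
  · intro x y hxy
    have h : ‖x - y‖ = ‖u x - u y‖ := by
      rw [← norm_neg (u x - u y)]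
      congr 1
      have hxy' : x + u x = y + u y := hxy
      rw [neg_sub, sub_eq_sub_iff_add_eq_add, hxy', add_comm]
    have h1 := hu x y
    rw [← h] at h1
    exact sub_eq_zero.1 (norm_eq_zero.1 (by nlinarith [norm_nonneg (x - y)]))
  · intro y
    have hcon : ContractingWith c.toNNReal fun x => y - u x := by
      refine ⟨by simpa using hc, LipschitzWith.of_dist_le_mul fun a b => ?_⟩
      rw [dist_eq_norm, dist_eq_norm, sub_sub_sub_cancel_left, norm_sub_rev]
      exact (hu a b).trans (mul_le_mul_of_nonneg_right (Real.le_coe_toNNReal c) (norm_nonneg _))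
    refine ⟨hcon.fixedPoint, ?_⟩
    have h := hcon.fixedPoint_isFixedPt
    exact (eq_sub_iff_add_eq.1 h.symm :)

section Volume

variable [MeasurableSpace E] [BorelSpace E]

/-- Small perturbations of the identity by a displacement vanishing on the boundary of a ball
preserve the volume of the ball. -/
lemma exists_forall_integral_det_one_add_smul_fderiv_eq {v : E → E} {S : ℝ}
    (hv : ContDiff ℝ 1 v) (hv0 : ∀ x, ‖x‖ = S → v x = 0)
    (hvS : ∀ x ∈ ball (0 : E) S, ‖x + v x‖ ≤ S) :
    ∃ ε : ℝ, 0 < ε ∧ ∀ t ∈ Ioo 0 ε,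
      ∫ x in ball (0 : E) S, (1 + t • fderiv ℝ v x).det = volume.real (ball (0 : E) S) := by
  have hcont : Continuous (fderiv ℝ v) := hv.continuous_fderiv one_ne_zero
  obtain ⟨K, hK⟩ := (isCompact_closedBall (0 : E) S).exists_bound_of_continuousOn
    hcont.continuousOn
  replace hK : ∀ x ∈ closedBall (0 : E) S, ‖fderiv ℝ v x‖ ≤ |K| := fun x hx =>
    (hK x hx).trans (le_abs_self K)
  have hlip := norm_indicator_closedBall_sub_le (abs_nonneg K) (fun x hx y hy =>
    (convex_closedBall (0 : E) S).norm_image_sub_le_of_norm_fderiv_le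
      (fun z _ => hv.differentiable one_ne_zero z) hK hy hx) hv0
  have hdet : ∀ᶠ A : E →L[ℝ] E in nhds 1, 0 < A.det := by
    refine (ContinuousLinearMap.continuous_det (𝕜 := ℝ) (E := E)).continuousAt.eventually
      (lt_mem_nhds ?_)
    change 0 < LinearMap.det (1 : E →ₗ[ℝ] E)
    simp
  obtain ⟨η, hη, hηdet⟩ := Metric.eventually_nhds_iff.1 hdet
  have hK1 : 0 < |K| + 1 := by positivity
  refine ⟨min 1 η / (|K| + 1), by positivity, fun t ⟨ht0, ht⟩ => ?_⟩
  have htK : t * (|K| + 1) < min 1 η := (lt_div_iff₀ hK1).1 ht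
  have ht1 : t * |K| < 1 := by nlinarith [min_le_left 1 η]
  have htη : t * |K| < η := by nlinarith [min_le_right 1 η]
  have htlt : t < 1 := by nlinarith [min_le_left 1 η, mul_nonneg ht0.le (abs_nonneg K)]
  set u : E → E := fun x => t • (closedBall (0 : E) S).indicator v x with hu
  have hbij : Function.Bijective fun x => x + u x := by
    refine bijective_add_of_norm_sub_le ht1 fun x y => ?_
    rw [hu, ← smul_sub, norm_smul, Real.norm_of_nonneg ht0.le, mul_assoc]
    exact mul_le_mul_of_nonneg_left (hlip x y) ht0.le
  have hu_ball : ∀ x ∈ ball (0 : E) S, u x = t • v x := fun x hx => by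
    simp only [hu, indicator_of_mem (ball_subset_closedBall hx)]
  have hinj : InjOn (fun x => x + t • v x) (ball (0 : E) S) := fun x hx y hy hxy =>
    hbij.1 (by simpa only [hu_ball x hx, hu_ball y hy] using hxy)
  have himage : (fun x => x + t • v x) '' ball (0 : E) S = ball 0 S := by
    refine Subset.antisymm ?_ fun y hy => ?_
    · rintro _ ⟨x, hx, rfl⟩
      have hx' := mem_ball_zero_iff.1 hx
      rw [mem_ball_zero_iff]
      calc ‖x + t • v x‖ = ‖(1 - t) • x + t • (x + v x)‖ := by congr 1; module
        _ ≤ (1 - t) * ‖x‖ + t * ‖x + v x‖ := by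
          refine (norm_add_le _ _).trans_eq ?_
          rw [norm_smul, norm_smul, Real.norm_of_nonneg ht0.le,
            Real.norm_of_nonneg (sub_nonneg.2 htlt.le)]
        _ < S := by nlinarith [hvS x hx, sub_pos.2 htlt]
    · obtain ⟨x, rfl⟩ := hbij.2 y
      by_cases hx : x ∈ ball (0 : E) S
      · exact ⟨x, hx, by simp only [hu_ball x hx]⟩
      · have hux : u x = 0 := by
          by_cases hxc : x ∈ closedBall (0 : E) S
          · have hxS : ‖x‖ = S := le_antisymm (by simpa using hxc) (by simpa using hx)
            simp [hu, indicator_of_mem hxc, hv0 x hxS]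
          · simp [hu, indicator_of_notMem hxc]
        simp only [hux, add_zero] at hy
        exact absurd hy hx
  have hderiv : ∀ x ∈ ball (0 : E) S, HasFDerivWithinAt (fun x => x + t • v x)
      (1 + t • fderiv ℝ v x) (ball (0 : E) S) x := fun x _ =>
    ((hasFDerivAt_id x).add
      (((hv.differentiable one_ne_zero x).hasFDerivAt).const_smul t)).hasFDerivWithinAt
  have hcv := integral_image_eq_integral_abs_det_fderiv_smul volume measurableSet_ball hderiv
    hinj (fun _ => (1 : ℝ))
  rw [himage] at hcv
  simp only [smul_eq_mul, mul_one, integral_const, MeasurableSet.univ, measureReal_restrict_apply,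
    univ_inter] at hcv
  rw [hcv]
  refine setIntegral_congr_fun measurableSet_ball fun x hx => (abs_of_pos (hηdet ?_)).symm
  rw [dist_eq_norm, add_sub_cancel_left, norm_smul, Real.norm_of_nonneg ht0.le]
  exact (mul_le_mul_of_nonneg_left (hK x (ball_subset_closedBall hx)) ht0.le).trans_lt htη

lemma integral_det_one_add_fderiv_eq {v : E → E} {S : ℝ}
    (hv : ContDiff ℝ 1 v) (hv0 : ∀ x, ‖x‖ = S → v x = 0)
    (hvS : ∀ x ∈ ball (0 : E) S, ‖x + v x‖ ≤ S) :
    ∫ x in ball (0 : E) S, (1 + fderiv ℝ v x).det = volume.real (ball (0 : E) S) := by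
  obtain ⟨ε, hε, hint⟩ := exists_forall_integral_det_one_add_smul_fderiv_eq hv hv0 hvS
  obtain ⟨s, w, hs, hw⟩ := exists_eval_one_eq_sum (Module.finrank ℝ E) hε
  have hcomb : ∀ A : E →L[ℝ] E, (1 + A).det = ∑ t ∈ s, w t * (1 + t • A).det := fun A => by
    obtain ⟨p, hp, hpA⟩ := exists_polynomial_eval_eq_det_one_add_smul A
    simpa only [hpA, one_smul] using hw p hp
  have hsum : ∑ t ∈ s, w t = 1 := by simpa using (hw 1 (by simp)).symm
  have hcont : Continuous (fderiv ℝ v) := hv.continuous_fderiv one_ne_zero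
  have hintble : ∀ t : ℝ, IntegrableOn (fun x => (1 + t • fderiv ℝ v x).det) (ball (0 : E) S) :=
    fun t => ((ContinuousLinearMap.continuous_det.comp
      (continuous_const.add (hcont.const_smul t))).continuousOn.integrableOn_compact
        (isCompact_closedBall (0 : E) S)).mono_set ball_subset_closedBall
  simp only [fun x => hcomb (fderiv ℝ v x)]
  rw [integral_finsetSum _ fun t _ => (hintble t).const_mul (w t)]
  simp_rw [integral_const_mul]
  rw [Finset.sum_congr rfl fun t ht => by rw [hint t (hs t ht)], ← Finset.sum_mul, hsum, one_mul]

end Volume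

/-- There is no `C¹` retraction of a ball onto its boundary sphere. -/
theorem not_exists_contDiff_retraction_sphere {r : E → E} {S : ℝ} (hS : 0 < S)
    (hr : ContDiff ℝ 1 r) (hrS : ∀ x ∈ ball (0 : E) S, ‖r x‖ = S) (hfix : ∀ x, ‖x‖ = S → r x = x) :
    False := by
  borelize E
  have hv : ContDiff ℝ 1 fun x => r x - x := hr.sub contDiff_id
  have hint := integral_det_one_add_fderiv_eq (S := S) hv
    (fun x hx => sub_eq_zero.2 (hfix x hx)) (fun x hx => by simp [hrS x hx])
  have hzero : ∀ x ∈ ball (0 : E) S, (1 + fderiv ℝ (fun x => r x - x) x).det = 0 := by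
    intro x hx
    have hrx := hr.differentiable one_ne_zero x
    have hfd : 1 + fderiv ℝ (fun x => r x - x) x = fderiv ℝ r x := by
      have h : HasFDerivAt (fun x => r x - x) (fderiv ℝ r x - 1) x :=
        hrx.hasFDerivAt.sub (hasFDerivAt_id x)
      rw [h.fderiv]
      exact add_sub_cancel _ _
    rw [hfd]
    by_contra hne
    obtain ⟨w, hw⟩ : ∃ w, fderiv ℝ r x w = r x :=
      (LinearMap.equivOfDetNeZero (fderiv ℝ r x : E →ₗ[ℝ] E) hne).surjective (r x)
    have hconst : (fun y => (inner ℝ (r y) (r y) : ℝ)) =ᶠ[nhds x] fun _ => S ^ 2 := by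
      filter_upwards [isOpen_ball.mem_nhds hx] with y hy
      rw [real_inner_self_eq_norm_sq, hrS y hy]
    have h1 := hconst.fderiv_eq (𝕜 := ℝ)
    have h2 := DFunLike.congr_fun h1 w
    rw [fderiv_inner_apply ℝ hrx hrx, hw, real_inner_self_eq_norm_sq, hrS x hx] at h2
    simp [hS.ne'] at h2
  rw [setIntegral_congr_fun measurableSet_ball hzero] at hint
  have hpos : 0 < volume.real (ball (0 : E) S) :=
    ENNReal.toReal_pos (measure_ball_pos _ _ hS).ne' measure_ball_lt_top.ne
  simp only [integral_zero] at hint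
  exact hpos.ne hint

/-- A `C¹` vector field pointing outwards on the complement of a ball has a zero. -/
theorem exists_eq_zero_of_inner_pos {g : E → E} (hg : ContDiff ℝ 1 g) {ρ : ℝ} (hρ : 0 < ρ)
    (hpos : ∀ x, ρ ≤ ‖x‖ → 0 < inner ℝ (g x) x) : ∃ x, g x = 0 := by
  by_contra! hne
  let b : ContDiffBump (0 : E) := ⟨ρ, 2 * ρ, hρ, by linarith⟩
  let F : E → E := fun x => b x • g x + (1 - b x) • x
  have hF : ContDiff ℝ 1 F :=
    (b.contDiff.smul hg).add ((contDiff_const.sub b.contDiff).smul contDiff_id)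
  have hF0 : ∀ x, F x ≠ 0 := by
    intro x hx
    rcases lt_or_ge ‖x‖ ρ with h | h
    · have hb : b x = 1 := b.one_of_mem_closedBall (by simpa using h.le)
      exact hne x (by simpa [F, hb] using hx)
    · have h1 : inner ℝ (F x) x = b x * inner ℝ (g x) x + (1 - b x) * ‖x‖ ^ 2 := by
        simp only [F, inner_add_left, real_inner_smul_left, real_inner_self_eq_norm_sq]
      rw [hx, inner_zero_left] at h1
      have hx2 : 0 < ‖x‖ ^ 2 := by have := hρ.trans_le h; positivity
      rcases b.nonneg.eq_or_lt (a := (0 : ℝ)) (b := b x) with hb | hb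
      · rw [← hb] at h1; linarith
      · have := mul_pos hb (hpos x h)
        have := mul_nonneg (sub_nonneg.2 (b.le_one (x := x))) hx2.le
        linarith
  have hnorm : ContDiff ℝ 1 fun x => ‖F x‖ := hF.norm ℝ hF0
  refine not_exists_contDiff_retraction_sphere (r := fun x => (2 * ρ * ‖F x‖⁻¹) • F x)
    (S := 2 * ρ) (by positivity)
    ((contDiff_const.mul (hnorm.inv fun x => norm_ne_zero_iff.2 (hF0 x))).smul hF) ?_ ?_
  · intro x _
    have := norm_pos_iff.2 (hF0 x)
    rw [norm_smul, Real.norm_of_nonneg (by positivity)]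
    field_simp
  · intro x hx
    have hb : b x = 0 := b.zero_of_le_dist (by simp [b, hx])
    have hFx : F x = x := by simp [F, hb]
    have : 2 * ρ * (2 * ρ)⁻¹ = 1 := mul_inv_cancel₀ (by positivity)
    simp only [hFx, hx, this, one_smul]

end Brouwer

section Cyclic

variable {J : ℕ}

/-- The discrete Laplacian on sequences indexed by `ZMod J`. -/
noncomputable def cyclicLap (h : ℝ) (x : ZMod J → ℝ) (j : ZMod J) : ℝ :=
  (x (j - 1) - 2 * x j + x (j + 1)) / h ^ 2

/-- The diagonal of the nonlinear term `dphi` on sequences indexed by `ZMod J`. -/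
def cyclicPhi (x : ZMod J → ℝ) (j : ZMod J) : ℝ :=
  (x (j - 1) + x j + x (j + 1)) * (x (j + 1) - x (j - 1))

lemma dlap_intCast (h : ℝ) (x : ZMod J → ℝ) :
    dlap h (fun i : ℤ => x i) = fun i : ℤ => cyclicLap h x i := by
  ext i
  simp [dlap, cyclicLap]

lemma dphi_intCast (x : ZMod J → ℝ) (i : ℤ) :
    dphi (fun i : ℤ => x i) (fun i : ℤ => x i) i = cyclicPhi x i := by
  simp [dphi, cyclicPhi]

variable [NeZero J]

lemma sum_cyclicLap_mul (h : ℝ) (x y : ZMod J → ℝ) :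
    ∑ j, cyclicLap h x j * y j = ∑ j, x j * cyclicLap h y j := by
  have h1 : ∑ j, x (j - 1) * y j = ∑ j, x j * y (j + 1) := by
    rw [← Equiv.sum_comp (Equiv.addRight (1 : ZMod J))]
    simp
  have h2 : ∑ j, x (j + 1) * y j = ∑ j, x j * y (j - 1) := by
    rw [← Equiv.sum_comp (Equiv.subRight (1 : ZMod J))]
    simp
  have h3 : ∑ j, cyclicLap h x j * y j = ((∑ j, x (j - 1) * y j) - 2 * (∑ j, x j * y j)
      + ∑ j, x (j + 1) * y j) / h ^ 2 := by
    rw [Finset.mul_sum, ← Finset.sum_sub_distrib, ← Finset.sum_add_distrib, Finset.sum_div]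
    exact Finset.sum_congr rfl fun j _ => by rw [cyclicLap]; ring
  rw [h3, h1, h2, Finset.mul_sum, ← Finset.sum_sub_distrib, ← Finset.sum_add_distrib,
    Finset.sum_div]
  exact Finset.sum_congr rfl fun j _ => by rw [cyclicLap]; ring

lemma sum_cyclicPhi_mul_self (x : ZMod J → ℝ) : ∑ j, cyclicPhi x j * x j = 0 := by
  have h1 : ∑ j, x (j - 1) * x j * (x (j - 1) + x j) =
      ∑ j, x j * x (j + 1) * (x j + x (j + 1)) := by
    rw [← Equiv.sum_comp (Equiv.addRight (1 : ZMod J))]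
    simp
  rw [← sub_eq_zero.2 h1.symm, ← Finset.sum_sub_distrib]
  exact Finset.sum_congr rfl fun j _ => by rw [cyclicPhi]; ring

lemma exists_cyclic_eq_zero {h k a b c e M : ℝ} (hk : 0 < k) (hM : k * M < 2)
    (hquad : ∀ s y : ℝ, -M * y ^ 2 ≤ a * s ^ 2 + b * (s * y) + c * y ^ 2) (W : ZMod J → ℝ) :
    ∃ x : ZMod J → ℝ, ∀ j, 2 * x j - 2 * W j
      + k * (a * cyclicLap h (cyclicLap h x) j + b * cyclicLap h x j + c * x j)
      - e * cyclicPhi x j = 0 := by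
  let g : EuclideanSpace ℝ (ZMod J) → EuclideanSpace ℝ (ZMod J) := fun x =>
    WithLp.toLp 2 fun j => 2 * x j - 2 * W j
      + k * (a * cyclicLap h (cyclicLap h x) j + b * cyclicLap h x j + c * x j)
      - e * cyclicPhi x j
  have hg : ContDiff ℝ 1 g := by
    rw [contDiff_euclidean]
    intro j
    simp only [g, cyclicLap, cyclicPhi]
    fun_prop
  let w : EuclideanSpace ℝ (ZMod J) := WithLp.toLp 2 W
  have hinner : ∀ x, (2 - k * M) * ‖x‖ ^ 2 - 2 * inner ℝ w x ≤ inner ℝ (g x) x := by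
    intro x
    have hx2 : ‖x‖ ^ 2 = ∑ j, x j ^ 2 := EuclideanSpace.real_norm_sq_eq x
    have hwx : inner ℝ w x = ∑ j, W j * x j := by
      simp [w, PiLp.inner_apply, mul_comm]
    have hgx : inner ℝ (g x) x = ∑ j, (2 * x j ^ 2 - 2 * (W j * x j)
        + k * (a * cyclicLap h x j ^ 2 + b * (cyclicLap h x j * x j) + c * x j ^ 2)) := by
      have h1 : inner ℝ (g x) x = ∑ j, (2 * x j ^ 2 - 2 * (W j * x j)
          + k * (b * (cyclicLap h x j * x j) + c * x j ^ 2))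
          + k * a * (∑ j, cyclicLap h (cyclicLap h x) j * x j)
          - e * ∑ j, cyclicPhi x j * x j := by
        rw [Finset.mul_sum, Finset.mul_sum, ← Finset.sum_add_distrib, ← Finset.sum_sub_distrib,
          PiLp.inner_apply]
        refine Finset.sum_congr rfl fun j _ => ?_
        simp only [g, RCLike.inner_apply, conj_trivial]
        ring
      rw [h1, sum_cyclicPhi_mul_self, sum_cyclicLap_mul, mul_zero, sub_zero, Finset.mul_sum,
        ← Finset.sum_add_distrib]
      exact Finset.sum_congr rfl fun j _ => by ring
    rw [hgx, hx2, hwx, Finset.mul_sum, Finset.mul_sum, ← Finset.sum_sub_distrib]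
    refine Finset.sum_le_sum fun j _ => ?_
    have := mul_le_mul_of_nonneg_left (hquad (cyclicLap h x j) (x j)) hk.le
    linarith
  have hκ : 0 < 2 - k * M := sub_pos.2 hM
  obtain ⟨x, hx⟩ := exists_eq_zero_of_inner_pos hg (ρ := (2 * ‖w‖ + 1) / (2 - k * M))
    (by positivity) fun x hx => by
      have h1 : 2 * ‖w‖ + 1 ≤ ‖x‖ * (2 - k * M) := (div_le_iff₀ hκ).1 hx
      have hx0 : 0 < ‖x‖ := lt_of_lt_of_le (by positivity) hx
      have h2 := real_inner_le_norm w x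
      have h3 := hinner x
      nlinarith [mul_le_mul_of_nonneg_right h1 hx0.le]
  exact ⟨x, fun j => congrArg (fun y : EuclideanSpace ℝ (ZMod J) => y j) hx⟩

end Cyclic

lemma mul_sq_div_lt_two {k δ p R R_T : ℝ} (hδ : 0 < δ) (hR : 0 < R) (hRT : R ≤ R_T)
    (hp : δ / R ^ 2 < p) (hk : 0 < k) (hksmall : k < 8 * δ / (p - δ / R_T ^ 2) ^ 2) :
    k * ((p - δ / R ^ 2) ^ 2 / (4 * δ)) < 2 := by
  have h1 : δ / R_T ^ 2 ≤ δ / R ^ 2 := by gcongr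
  have h2 : (p - δ / R ^ 2) ^ 2 ≤ (p - δ / R_T ^ 2) ^ 2 := by
    gcongr
  have hpos : 0 < (p - δ / R_T ^ 2) ^ 2 := pow_pos (by linarith) 2
  rw [lt_div_iff₀ hpos] at hksmall
  rw [← mul_div_assoc, div_lt_iff₀ (by positivity)]
  nlinarith [mul_le_mul_of_nonneg_left h2 hk.le]

theorem stmt_12 (J : ℕ) (hJ : 1 ≤ J) (h k v_c δ α R R₀ R_T : ℝ)
    (hh : 0 < h) (hk : 0 < k) (hδ : 0 < δ) (hα : 1 < α)
    (hR₀ : Real.sqrt (δ / (α - 1)) < R₀) (hRR₀ : R₀ ≤ R) (hRT : R ≤ R_T)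
    (hksmall : k < 8 * δ / (α - 1 - δ / R_T ^ 2) ^ 2)
    (V : ℤ → ℝ) (hV : ∀ i : ℤ, V (i + J) = V i) :
    ∃ F : ℤ → ℝ, (∀ i : ℤ, F (i + J) = F i) ∧
      ∀ i : ℤ,
        2 * F i - 2 * V i
          + k * ((δ / R ^ 4) * dlap h (dlap h F) i
              + (1 / R ^ 2) * (α - 1 + δ / R ^ 2) * dlap h F i
              + ((α - 1) / R ^ 2) * F i)
          - (k * v_c / (6 * h)) * (1 / R ^ 2) * dphi F F i = 0 := by
  have : NeZero J := ⟨by omega⟩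
  have hsqrt : Real.sqrt (δ / (α - 1)) < R := hR₀.trans_le hRR₀
  have hR : 0 < R := (Real.sqrt_nonneg _).trans_lt hsqrt
  have hα1 : 0 < α - 1 := sub_pos.2 hα
  have hp : δ / R ^ 2 < α - 1 := by
    rw [Real.sqrt_lt' hR, div_lt_iff₀ hα1] at hsqrt
    rw [div_lt_iff₀ (by positivity)]
    linarith
  have hM := mul_sq_div_lt_two hδ hR hRT hp hk hksmall
  have hVJ : ∀ i : ℤ, V ((i : ZMod J).val : ℤ) = V i := fun i => by
    rw [ZMod.val_intCast]
    rw [← Int.emod_add_mul_ediv i J, mul_comm]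
    simpa using ((show Function.Periodic V (J : ℤ) from hV).int_mul (i / J) (i % J)).symm
  obtain ⟨x, hx⟩ := exists_cyclic_eq_zero (J := J) (h := h) (a := δ / R ^ 4)
    (b := (1 / R ^ 2) * (α - 1 + δ / R ^ 2)) (c := (α - 1) / R ^ 2)
    (e := (k * v_c / (6 * h)) * (1 / R ^ 2)) hk hM (fun s y => by
      have hsq : 0 ≤ (2 * δ * s / R ^ 2 + (α - 1 + δ / R ^ 2) * y) ^ 2 / (4 * δ) := by positivity
      rw [← sub_nonneg]
      convert hsq using 1
      field_simp
      ring) (fun j => V (j.val : ℤ))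
  refine ⟨fun i => x i, fun i => by simp, fun i => ?_⟩
  rw [dlap_intCast, dlap_intCast h (cyclicLap h x), dphi_intCast, ← hVJ i]
  exact hx i
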